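/- arXiv:1009.5841 — 7 statements merged into one kernel-verified Lean document; each statement's English description precedes it below -/
import Mathlib

section
/- The model triangle in the hyperbolic plane is unique up to isometry: if p, q, r and p', q', r' are points of the upper half-plane ℍ (with its hyperbolic metric) satisfying dist p q = dist p' q', dist p r = dist p' r', and dist q r = dist q' r', then there exists an isometric equivalence e : ℍ ≃ᵢ ℍ with e p = p', e q = q', and e r = r'. -/
open UpperHalfPlane

namespace UpperHalfPlane

open scoped MatrixGroups

/-- The action of `GL(2, ℝ)` on the upper half-plane, including the orientation-reversing
elements, is isometric. -/
theorem isometry_gl_smul (g : GL (Fin 2) ℝ) : Isometry (g • · : ℍ → ℍ) := by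
  refine Isometry.of_dist_eq fun z w => ?_
  have hz := denom_ne_zero g z
  have hw := denom_ne_zero g w
  have hsub : num g z / denom g z - num g w / denom g w =
      ((g.det.val : ℝ) : ℂ) * (z - w) / (denom g z * denom g w) := by
    rw [div_sub_div _ _ hz hw]
    congr 1
    simp only [num, denom, Matrix.GeneralLinearGroup.val_det_apply, g.1.det_fin_two]
    push_cast
    ring
  have hdet : |g.det.val| ≠ 0 := abs_ne_zero.mpr g.det.ne_zero
  have hcosh : Real.cosh (dist (g • z) (g • w)) = Real.cosh (dist z w) := by
    rw [cosh_dist, cosh_dist, im_smul_eq_div_normSq, im_smul_eq_div_normSq, coe_smul, coe_smul,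
      dist_eq_norm, ← map_sub, norm_σ, hsub, dist_eq_norm, norm_div, norm_mul, norm_mul,
      Complex.norm_real, Real.norm_eq_abs, Complex.normSq_eq_norm_sq, Complex.normSq_eq_norm_sq]
    have hz' := norm_ne_zero_iff.mpr hz
    have hw' := norm_ne_zero_iff.mpr hw
    have := z.im_ne_zero
    have := w.im_ne_zero
    field_simp
  exact Real.cosh_strictMonoOn.injOn dist_nonneg dist_nonneg hcosh

theorem dist_eq_dist_iff (a b c : ℍ) : dist c a = dist c b ↔
    b.im * ((c.re - a.re) ^ 2 + (c.im - a.im) ^ 2) =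
      a.im * ((c.re - b.re) ^ 2 + (c.im - b.im) ^ 2) := by
  have hcosh : dist c a = dist c b ↔ Real.cosh (dist c a) = Real.cosh (dist c b) :=
    (Real.cosh_strictMonoOn.injOn.eq_iff dist_nonneg dist_nonneg).symm
  have ha := a.im_ne_zero
  have hb := b.im_ne_zero
  have hc := c.im_ne_zero
  rw [hcosh, cosh_dist, cosh_dist, dist_eq_norm, dist_eq_norm, ← Complex.normSq_eq_norm_sq,
    ← Complex.normSq_eq_norm_sq, Complex.normSq_apply, Complex.normSq_apply, add_right_inj,
    div_eq_div_iff (by positivity) (by positivity)]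
  simp only [Complex.sub_re, Complex.sub_im, coe_re, coe_im]
  constructor <;> intro h
  · apply mul_left_cancel₀ (mul_ne_zero two_ne_zero hc)
    linear_combination h
  · linear_combination 2 * c.im * h

/-- The reflection in the perpendicular bisector of two points. -/
theorem exists_isometryEquiv_reflection (a b : ℍ) :
    ∃ e : ℍ ≃ᵢ ℍ, e a = b ∧ ∀ c, dist c a = dist c b → e c = c := by
  rcases eq_or_ne a b with rfl | hab
  · exact ⟨.refl ℍ, rfl, fun _ _ => rfl⟩
  set d := b.im - a.im with hd
  set m := b.im * a.re - a.im * b.re with hm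
  set k := b.im * (a.re ^ 2 + a.im ^ 2) - a.im * (b.re ^ 2 + b.im ^ 2) with hk
  have hdet : Matrix.det !![m, -k; d, -m] < 0 := by
    have hpos : 0 < (a.re - b.re) ^ 2 + d ^ 2 := by
      by_contra! h
      have hre : a.re - b.re = 0 := by nlinarith [sq_nonneg (a.re - b.re), sq_nonneg d]
      have him : d = 0 := by nlinarith [sq_nonneg (a.re - b.re), sq_nonneg d]
      exact hab (UpperHalfPlane.ext (Complex.ext (sub_eq_zero.mp hre) (sub_eq_zero.mp him).symm))
    have hprod := mul_pos (mul_pos a.im_pos b.im_pos) hpos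
    rw [Matrix.det_fin_two_of]
    linear_combination hprod
  let g : GL (Fin 2) ℝ := .mkOfDetNeZero _ hdet.ne
  have hσ (z : ℂ) : σ g z = starRingEnd ℂ z := by
    have : ¬0 < g.det.val := not_lt.mpr hdet.le
    rw [σ, if_neg this]
    rfl
  have hsmul {z w : ℍ} (hre : m * z.re - k = d * (z.re * w.re + z.im * w.im) - m * w.re)
      (him : m * (w.im - z.im) = d * (z.re * w.im - z.im * w.re)) : g • z = w := by
    have hz := denom_ne_zero_of_im g (σ_im_ne_zero (g := g).mpr z.im_ne_zero)
    apply UpperHalfPlane.ext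
    rw [coe_smul, map_div₀, σ_num, σ_denom, div_eq_iff hz, hσ]
    simp only [num, denom, g, Matrix.GeneralLinearGroup.mkOfDetNeZero]
    apply Complex.ext
    · simp
      linear_combination hre
    · simp
      linear_combination him
  refine ⟨⟨MulAction.toPerm g, isometry_gl_smul g⟩, ?_, fun c hc => ?_⟩
  · apply hsmul <;> simp only [hd, hm, hk] <;> ring
  · rw [dist_eq_dist_iff] at hc
    apply hsmul <;> simp only [hd, hm, hk]
    · linear_combination -hc
    · ring

end UpperHalfPlane

/-- The hyperbolic model triangle is unique up to an isometry of the
hyperbolic plane (the upper half-plane with its hyperbolic metric). -/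
theorem hyperbolic_model_triangle_unique_up_to_isometry
    (p q r p' q' r' : UpperHalfPlane)
    (hpq : dist p q = dist p' q') (hpr : dist p r = dist p' r')
    (hqr : dist q r = dist q' r') :
    ∃ e : UpperHalfPlane ≃ᵢ UpperHalfPlane,
      e p = p' ∧ e q = q' ∧ e r = r' := by
  obtain ⟨e₁, hp, -⟩ := exists_isometryEquiv_reflection p p'
  obtain ⟨e₂, hq, he₂⟩ := exists_isometryEquiv_reflection (e₁ q) q'
  have hp₂ : e₂ p' = p' := he₂ p' (by rw [← hpq, ← hp, e₁.dist_eq])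
  obtain ⟨e₃, hr, he₃⟩ := exists_isometryEquiv_reflection (e₂ (e₁ r)) r'
  have hp₃ : e₃ p' = p' := he₃ p' (by
    rw [← hpr]
    nth_rewrite 1 [← hp₂, ← hp]
    rw [e₂.dist_eq, e₁.dist_eq])
  have hq₃ : e₃ q' = q' := he₃ q' (by
    rw [← hqr, ← hq, e₂.dist_eq, e₁.dist_eq])
  exact ⟨(e₁.trans e₂).trans e₃, by simp [hp, hp₂, hp₃], by simp [hq, hq₃], by simp [hr]⟩
end

section
/- The comparison angle is monotone increasing in the curvature κ (case κ = −1 versus κ = 0): if a, b, c are positive reals satisfying the strict triangle inequalities a < b + c, b < a + c, c < a + b, then Real.arccos((Real.cosh a * Real.cosh b − Real.cosh c)/(Real.sinh a * Real.sinh b)) ≤ Real.arccos((a^2 + b^2 − c^2)/(2*a*b)). -/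
/-- The function `t ↦ cosh √t` is convex on `[0, ∞)`, its power series having nonnegative
coefficients. -/
theorem convexOn_cosh_sqrt : ConvexOn ℝ (Set.Ici 0) fun t : ℝ => Real.cosh √t := by
  have hasSum_cosh_sqrt (t : ℝ) (ht : 0 ≤ t) :
      HasSum (fun n : ℕ => t ^ n / ((2 * n).factorial : ℝ)) (Real.cosh √t) := by
    simpa only [pow_mul, Real.sq_sqrt ht] using Real.hasSum_cosh √t
  refine ⟨convex_Ici 0, fun x hx y hy p q hp hq hpq => ?_⟩
  have hxy : p • x + q • y ∈ Set.Ici (0 : ℝ) := convex_Ici 0 hx hy hp hq hpq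
  refine hasSum_le (fun n => ?_) (hasSum_cosh_sqrt _ hxy)
    (((hasSum_cosh_sqrt x hx).mul_left p).add ((hasSum_cosh_sqrt y hy).mul_left q))
  have hpow := (convexOn_pow (𝕜 := ℝ) n).2 hx hy hp hq hpq
  rw [← mul_div_assoc, ← mul_div_assoc, ← add_div]
  exact div_le_div_of_nonneg_right hpow (Nat.cast_nonneg _)

/-- The comparison angle is monotone increasing in the curvature κ:
case κ = -1 (hyperbolic law of cosines) versus κ = 0 (Euclidean law of
cosines). -/
theorem comparison_angle_mono_kappa_neg_one_le_zero
    (a b c : ℝ) (ha : 0 < a) (hb : 0 < b) (hc : 0 < c)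
    (habc : a < b + c) (hbac : b < a + c) (hcab : c < a + b) :
    Real.arccos ((Real.cosh a * Real.cosh b - Real.cosh c) /
        (Real.sinh a * Real.sinh b)) ≤
      Real.arccos ((a ^ 2 + b ^ 2 - c ^ 2) / (2 * a * b)) := by
  apply Real.arccos_le_arccos
  have hab : 0 < 2 * a * b := by positivity
  rw [le_div_iff₀ (mul_pos (Real.sinh_pos_iff.2 ha) (Real.sinh_pos_iff.2 hb))]
  set x := (a ^ 2 + b ^ 2 - c ^ 2) / (2 * a * b) with hx
  have hx_le : x ≤ 1 := by
    rw [hx, div_le_one hab]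
    nlinarith
  have le_hx : -1 ≤ x := by
    rw [hx, le_div_iff₀ hab]
    nlinarith
  have hcx : (1 + x) / 2 * (a - b) ^ 2 + (1 - x) / 2 * (a + b) ^ 2 = c ^ 2 := by
    rw [hx]
    field_simp
    ring
  have hconv := convexOn_cosh_sqrt.2 (Set.mem_Ici.2 (sq_nonneg (a - b)))
    (Set.mem_Ici.2 (sq_nonneg (a + b))) (by linarith : 0 ≤ (1 + x) / 2)
    (by linarith : 0 ≤ (1 - x) / 2) (by ring)
  simp only [smul_eq_mul, hcx, Real.sqrt_sq_eq_abs, Real.cosh_abs, Real.cosh_sub,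
    Real.cosh_add] at hconv
  linarith
end

section
/- The comparison angle is monotone increasing in the curvature κ (case κ = 0 versus κ = 1): if a, b, c are reals with 0 < a < π, 0 < b < π, 0 < c < π, satisfying the strict triangle inequalities a < b + c, b < a + c, c < a + b, and a + b + c < 2π, then Real.arccos((a^2 + b^2 − c^2)/(2*a*b)) ≤ Real.arccos((Real.cos c − Real.cos a * Real.cos b)/(Real.sin a * Real.sin b)). -/
/-- The function `sin x / x` is decreasing on `(0, π]`. -/
lemma mul_sin_le_mul_sin {x y : ℝ} (hx : 0 ≤ x) (hxy : x ≤ y) (hy : 0 < y) (hyπ : y ≤ Real.pi) :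
    x * Real.sin y ≤ y * Real.sin x := by
  have h := strictConcaveOn_sin_Icc.concaveOn.2 (Set.left_mem_Icc.2 Real.pi_pos.le)
    (show y ∈ Set.Icc 0 Real.pi from ⟨hy.le, hyπ⟩)
    (sub_nonneg.2 ((div_le_one hy).2 hxy)) (div_nonneg hx hy.le) (sub_add_cancel 1 (x / y))
  simp only [smul_eq_mul, mul_zero, Real.sin_zero, zero_add, div_mul_cancel₀ x hy.ne'] at h
  rw [div_mul_eq_mul_div, div_le_iff₀ hy] at h
  linarith

/-- The comparison angle is monotone increasing in the curvature κ:
case κ = 0 (Euclidean law of cosines) versus κ = 1 (spherical law of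
cosines on the unit sphere). -/
theorem comparison_angle_mono_kappa_zero_le_one
    (a b c : ℝ) (ha : 0 < a) (ha' : a < Real.pi)
    (hb : 0 < b) (hb' : b < Real.pi) (hc : 0 < c) (hc' : c < Real.pi)
    (habc : a < b + c) (hbac : b < a + c) (hcab : c < a + b)
    (hper : a + b + c < 2 * Real.pi) :
    Real.arccos ((a ^ 2 + b ^ 2 - c ^ 2) / (2 * a * b)) ≤
      Real.arccos ((Real.cos c - Real.cos a * Real.cos b) /
        (Real.sin a * Real.sin b)) := by
  have hsa := Real.sin_pos_of_pos_of_lt_pi ha ha'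
  have hsb := Real.sin_pos_of_pos_of_lt_pi hb hb'
  refine Real.arccos_le_arccos ?_
  rw [div_le_div_iff₀ (by positivity) (by positivity)]
  have hp : (c + a - b) / 2 * Real.sin a ≤ a * Real.sin ((c + a - b) / 2) :=
    mul_sin_le_mul_sin (by linarith) (by linarith) ha ha'.le
  have hq : (c - a + b) / 2 * Real.sin b ≤ b * Real.sin ((c - a + b) / 2) :=
    mul_sin_le_mul_sin (by linarith) (by linarith) hb hb'.le
  have hpq := mul_le_mul hp hq (mul_nonneg (by linarith) hsb.le)
    ((mul_nonneg (by linarith) hsa.le).trans hp)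
  have hsin : Real.cos c - Real.cos (a - b) =
      -2 * Real.sin ((c + a - b) / 2) * Real.sin ((c - a + b) / 2) := by
    rw [Real.cos_sub_cos]
    ring_nf
  rw [Real.cos_sub] at hsin
  linear_combination 4 * hpq + 2 * a * b * hsin
end

section
/- (Euclidean case of Proposition 6.5.) Let (X, d) be a metric space and let x₁, x₂, x₃, x₄ ∈ X be four pairwise distinct points forming a nondegenerate quadruple, i.e. d(x_i, x_k) < d(x_i, x_j) + d(x_j, x_k) for all pairwise distinct indices i, j, k. Then there exist points p₁, p₂, p₃, p₄ in EuclideanSpace ℝ (Fin 3) with dist p_i p_j = d(x_i, x_j) for all i, j, if and only if for every index i the following two conditions hold, where {j, l, m} = {1,2,3,4} \ {i}: (i) α₀(x_i; x_j, x_l) + α₀(x_i; x_j, x_m) + α₀(x_i; x_l, x_m) ≤ 2π, and (ii) each of the three angles α₀(x_i; x_j, x_l), α₀(x_i; x_j, x_m), α₀(x_i; x_l, x_m) is at most the sum of the other two. -/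
/-- The Euclidean comparison angle at `x` subtended by `y` and `z`:
the angle at the vertex corresponding to `x` of the Euclidean model
triangle with side lengths `dist x y`, `dist x z`, `dist y z`. -/
noncomputable def comparisonAngle₀ {X : Type*} [MetricSpace X] (x y z : X) : ℝ :=
  Real.arccos ((dist x y ^ 2 + dist x z ^ 2 - dist y z ^ 2) /
    (2 * dist x y * dist x z))

open InnerProductGeometry in
/-- The angles between three vectors add up to at most `2π`. -/
lemma angle_add_angle_add_angle_le_two_pi {V : Type*} [NormedAddCommGroup V]
    [InnerProductSpace ℝ V] (u v w : V) :
    angle u v + angle u w + angle v w ≤ 2 * Real.pi := by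
  have h := angle_le_angle_add_angle u (-w) v
  rw [angle_neg_right, angle_neg_left, angle_comm w v] at h
  linarith

/-- The bounds on `cos c` behind the spherical law of cosines. -/
lemma abs_cos_sub_cos_mul_cos_le {a b c : ℝ} (ha : a ∈ Set.Icc 0 Real.pi)
    (hb : b ∈ Set.Icc 0 Real.pi) (hc : c ∈ Set.Icc 0 Real.pi)
    (hsum : a + b + c ≤ 2 * Real.pi) (hab : a ≤ b + c) (hba : b ≤ a + c) (hcab : c ≤ a + b) :
    |Real.cos c - Real.cos a * Real.cos b| ≤ Real.sin a * Real.sin b := by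
  obtain ⟨ha0, haπ⟩ := ha
  obtain ⟨hb0, hbπ⟩ := hb
  obtain ⟨hc0, hcπ⟩ := hc
  have hupper : Real.cos c ≤ Real.cos (a - b) := by
    rw [← Real.cos_abs (a - b)]
    exact Real.cos_le_cos_of_nonneg_of_le_pi (abs_nonneg _) hcπ
      (abs_le.2 ⟨by linarith, by linarith⟩)
  have hlower : Real.cos (a + b) ≤ Real.cos c := by
    rcases le_total (a + b) Real.pi with h | h
    · exact Real.cos_le_cos_of_nonneg_of_le_pi hc0 h hcab
    · rw [← Real.cos_two_pi_sub (a + b)]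
      exact Real.cos_le_cos_of_nonneg_of_le_pi hc0 (by linarith) (by linarith)
  rw [Real.cos_sub] at hupper
  rw [Real.cos_add] at hlower
  exact abs_le.2 ⟨by linarith, by linarith⟩

/-- Three angles in `[0, π]` satisfying the triangle inequalities and with sum at most `2π`
are the angles between three unit vectors of Euclidean 3-space. -/
lemma exists_unit_vectors_inner_eq_cos {a b c : ℝ} (ha : a ∈ Set.Icc 0 Real.pi)
    (hb : b ∈ Set.Icc 0 Real.pi) (hc : c ∈ Set.Icc 0 Real.pi)
    (hsum : a + b + c ≤ 2 * Real.pi) (hab : a ≤ b + c) (hba : b ≤ a + c) (hcab : c ≤ a + b) :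
    ∃ u v w : EuclideanSpace ℝ (Fin 3), ‖u‖ = 1 ∧ ‖v‖ = 1 ∧ ‖w‖ = 1 ∧
      inner ℝ u v = Real.cos a ∧ inner ℝ u w = Real.cos b ∧ inner ℝ v w = Real.cos c := by
  have hK := abs_cos_sub_cos_mul_cos_le ha hb hc hsum hab hba hcab
  obtain ⟨s, t, hst, hs⟩ : ∃ s t : ℝ, s ^ 2 + t ^ 2 = 1 ∧
      Real.sin a * Real.sin b * s = Real.cos c - Real.cos a * Real.cos b := by
    set K := Real.cos c - Real.cos a * Real.cos b
    have hD : 0 ≤ Real.sin a * Real.sin b := (abs_nonneg K).trans hK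
    have hle : (K / (Real.sin a * Real.sin b)) ^ 2 ≤ 1 := by
      rw [sq_le_one_iff_abs_le_one, abs_div, abs_of_nonneg hD]
      exact div_le_one_of_le₀ hK hD
    refine ⟨K / (Real.sin a * Real.sin b), √(1 - (K / (Real.sin a * Real.sin b)) ^ 2), ?_, ?_⟩
    · rw [Real.sq_sqrt (by linarith)]
      ring
    · refine mul_div_cancel_of_imp' fun h => ?_
      rw [h] at hK
      exact abs_nonpos_iff.1 hK
  refine ⟨!₂[1, 0, 0], !₂[Real.cos a, Real.sin a, 0],
    !₂[Real.cos b, Real.sin b * s, Real.sin b * t], ?_, ?_, ?_, ?_, ?_, ?_⟩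
  · simp [EuclideanSpace.norm_eq, Fin.sum_univ_three]
  · simp [EuclideanSpace.norm_eq, Fin.sum_univ_three]
  · simp only [EuclideanSpace.norm_eq, Fin.sum_univ_three, Real.norm_eq_abs, sq_abs]
    rw [Real.sqrt_eq_one]
    simp
    linear_combination Real.sin b ^ 2 * hst + Real.sin_sq_add_cos_sq b
  · simp [PiLp.inner_apply, Fin.sum_univ_three]
  · simp [PiLp.inner_apply, Fin.sum_univ_three]
  · simp [PiLp.inner_apply, Fin.sum_univ_three]
    linear_combination hs

section ComparisonAngle

variable {X : Type*} [MetricSpace X]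

lemma comparisonAngle₀_comm (x y z : X) : comparisonAngle₀ x y z = comparisonAngle₀ x z y := by
  unfold comparisonAngle₀
  rw [dist_comm y z]
  congr 1
  ring

lemma comparisonAngle₀_mem_Icc (x y z : X) : comparisonAngle₀ x y z ∈ Set.Icc 0 Real.pi :=
  ⟨Real.arccos_nonneg _, Real.arccos_le_pi _⟩

/-- The law of cosines for the comparison triangle. -/
lemma two_mul_dist_mul_dist_mul_cos_comparisonAngle₀ {x y z : X} (hy : x ≠ y) (hz : x ≠ z) :
    2 * dist x y * dist x z * Real.cos (comparisonAngle₀ x y z) =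
      dist x y ^ 2 + dist x z ^ 2 - dist y z ^ 2 := by
  have hy' := dist_pos.2 hy
  have hz' := dist_pos.2 hz
  have hpos : 0 < 2 * dist x y * dist x z := by positivity
  have hxyz := dist_triangle x y z
  have hxzy := dist_triangle x z y
  have hyxz := dist_triangle y x z
  rw [dist_comm z y] at hxzy
  rw [dist_comm y x] at hyxz
  rw [comparisonAngle₀, Real.cos_arccos]
  · field_simp
  · rw [le_div_iff₀ hpos]
    nlinarith [dist_nonneg (x := y) (y := z)]
  · rw [div_le_one hpos]
    nlinarith [dist_nonneg (x := y) (y := z)]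

/-- Unit vectors enclosing the comparison angle realize the comparison triangle. -/
lemma dist_smul_smul_eq_of_inner_eq_cos_comparisonAngle₀ {V : Type*} [NormedAddCommGroup V]
    [InnerProductSpace ℝ V] {x y z : X} (hy : x ≠ y) (hz : x ≠ z) {u v : V}
    (hu : ‖u‖ = 1) (hv : ‖v‖ = 1) (huv : inner ℝ u v = Real.cos (comparisonAngle₀ x y z)) :
    dist (dist x y • u) (dist x z • v) = dist y z := by
  rw [← sq_eq_sq₀ dist_nonneg dist_nonneg, dist_eq_norm, norm_sub_sq_real, norm_smul, norm_smul,
    hu, hv, real_inner_smul_left, real_inner_smul_right, huv, Real.norm_eq_abs, Real.norm_eq_abs,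
    abs_of_nonneg dist_nonneg, abs_of_nonneg dist_nonneg]
  linear_combination -two_mul_dist_mul_dist_mul_cos_comparisonAngle₀ hy hz

lemma comparisonAngle₀_eq_angle {V : Type*} [NormedAddCommGroup V]
    [InnerProductSpace ℝ V] {x y z : X} {p q r : V} (hpq : dist p q = dist x y)
    (hpr : dist p r = dist x z) (hqr : dist q r = dist y z) :
    comparisonAngle₀ x y z = InnerProductGeometry.angle (q - p) (r - p) := by
  rw [comparisonAngle₀, InnerProductGeometry.angle,
    real_inner_eq_norm_mul_self_add_norm_mul_self_sub_norm_sub_mul_self_div_two,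
    sub_sub_sub_cancel_right, ← dist_eq_norm, ← dist_eq_norm, ← dist_eq_norm, dist_comm q p,
    dist_comm r p, hpq, hpr, hqr, div_div]
  congr 1
  ring

end ComparisonAngle

/-- Euclidean case of Proposition 6.5: a nondegenerate metric quadruple
embeds isometrically in Euclidean 3-space iff at every point the three
comparison angles have sum at most `2π` and satisfy the triangle
inequality among themselves. -/
theorem quadruple_embeds_iff_comparison_angle_conditions
    {X : Type*} [MetricSpace X] (x : Fin 4 → X)
    (hinj : Function.Injective x)
    (hnd : ∀ i j k : Fin 4, i ≠ j → j ≠ k → i ≠ k →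
      dist (x i) (x k) < dist (x i) (x j) + dist (x j) (x k)) :
    (∃ p : Fin 4 → EuclideanSpace ℝ (Fin 3),
        ∀ i j, dist (p i) (p j) = dist (x i) (x j)) ↔
      (∀ i j l m : Fin 4, i ≠ j → i ≠ l → i ≠ m → j ≠ l → j ≠ m → l ≠ m →
        (comparisonAngle₀ (x i) (x j) (x l) + comparisonAngle₀ (x i) (x j) (x m) +
            comparisonAngle₀ (x i) (x l) (x m) ≤ 2 * Real.pi ∧
          comparisonAngle₀ (x i) (x j) (x l) ≤
            comparisonAngle₀ (x i) (x j) (x m) + comparisonAngle₀ (x i) (x l) (x m))) := by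
  constructor
  · rintro ⟨p, hp⟩ i j l m - - - - - -
    have hangle (j l : Fin 4) : comparisonAngle₀ (x i) (x j) (x l) =
        InnerProductGeometry.angle (p j - p i) (p l - p i) :=
      comparisonAngle₀_eq_angle (hp i j) (hp i l) (hp j l)
    rw [hangle, hangle, hangle]
    refine ⟨angle_add_angle_add_angle_le_two_pi _ _ _, ?_⟩
    rw [InnerProductGeometry.angle_comm (p l - p i)]
    exact InnerProductGeometry.angle_le_angle_add_angle _ _ _
  · intro h
    obtain ⟨hsum, h12⟩ := h 0 1 2 3 (by decide) (by decide) (by decide) (by decide) (by decide)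
      (by decide)
    obtain ⟨-, h13⟩ := h 0 1 3 2 (by decide) (by decide) (by decide) (by decide) (by decide)
      (by decide)
    obtain ⟨-, h23⟩ := h 0 2 3 1 (by decide) (by decide) (by decide) (by decide) (by decide)
      (by decide)
    rw [comparisonAngle₀_comm _ (x 3) (x 2)] at h13
    rw [comparisonAngle₀_comm _ (x 2) (x 1), comparisonAngle₀_comm _ (x 3) (x 1)] at h23
    obtain ⟨u, v, w, hu, hv, hw, huv, huw, hvw⟩ := exists_unit_vectors_inner_eq_cos
      (comparisonAngle₀_mem_Icc _ _ _) (comparisonAngle₀_mem_Icc _ _ _)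
      (comparisonAngle₀_mem_Icc _ _ _) hsum h12 h13 h23
    have h1 : x 0 ≠ x 1 := hinj.ne (by decide)
    have h2 : x 0 ≠ x 2 := hinj.ne (by decide)
    have h3 : x 0 ≠ x 3 := hinj.ne (by decide)
    have d12 := dist_smul_smul_eq_of_inner_eq_cos_comparisonAngle₀ h1 h2 hu hv huv
    have d13 := dist_smul_smul_eq_of_inner_eq_cos_comparisonAngle₀ h1 h3 hu hw huw
    have d23 := dist_smul_smul_eq_of_inner_eq_cos_comparisonAngle₀ h2 h3 hv hw hvw
    let p : Fin 4 → EuclideanSpace ℝ (Fin 3) :=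
      ![0, dist (x 0) (x 1) • u, dist (x 0) (x 2) • v, dist (x 0) (x 3) • w]
    have hlt (i j : Fin 4) (hij : i < j) : dist (p i) (p j) = dist (x i) (x j) := by
      fin_cases i <;> fin_cases j <;>
        first
        | exact absurd hij (by decide)
        | exact d12
        | exact d13
        | exact d23
        | simp [p, norm_smul, hu, hv, hw]
    refine ⟨p, fun i j => ?_⟩
    rcases lt_trichotomy i j with hij | rfl | hij
    · exact hlt i j hij
    · rw [dist_self, dist_self]
    · rw [dist_comm, hlt j i hij, dist_comm]
end

section
/- (Planarity addendum to the Euclidean case of Proposition 6.5.) Let (X, d) be a metric space and let x₁, x₂, x₃, x₄ ∈ X be four pairwise distinct points forming a nondegenerate quadruple (all triangle inequalities among them strict) that satisfies, for every index i with {j, l, m} = {1,2,3,4} \ {i}: α₀(x_i; x_j, x_l) + α₀(x_i; x_j, x_m) + α₀(x_i; x_l, x_m) ≤ 2π and each of these three angles is at most the sum of the other two. If moreover there exists an index i for which one of the three comparison angles at x_i equals the sum of the other two, then there exist points p₁, p₂, p₃, p₄ in EuclideanSpace ℝ (Fin 2) with dist p_i p_j = d(x_i, x_j) for all i, j. -/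
/-- The law of cosines for the comparison angle. -/
theorem cos_comparisonAngle₀_mul {X : Type*} [MetricSpace X] (x y z : X) :
    2 * dist x y * dist x z * Real.cos (comparisonAngle₀ x y z) =
      dist x y ^ 2 + dist x z ^ 2 - dist y z ^ 2 := by
  rcases eq_or_ne x y with rfl | hy
  · simp
  rcases eq_or_ne x z with rfl | hz
  · simp [dist_comm]
  have hy' : 0 < dist x y := dist_pos.2 hy
  have hz' : 0 < dist x z := dist_pos.2 hz
  have hpos : 0 < 2 * dist x y * dist x z := by positivity
  have hyz : dist y z ≤ dist x y + dist x z := dist_triangle_left y z x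
  have hxy : dist x y ≤ dist x z + dist y z := dist_triangle_right x y z
  have hxz : dist x z ≤ dist x y + dist y z := dist_triangle x y z
  have hnn : 0 ≤ dist y z := dist_nonneg
  rw [comparisonAngle₀, Real.cos_arccos, mul_div_cancel₀ _ hpos.ne']
  · rw [le_div_iff₀ hpos]
    nlinarith
  · rw [div_le_one hpos]
    nlinarith

/-- The law of cosines for points of the plane given in polar coordinates. -/
theorem dist_polar_sq (r s θ φ : ℝ) :
    dist (!₂[r * Real.cos θ, r * Real.sin θ] : EuclideanSpace ℝ (Fin 2))
        !₂[s * Real.cos φ, s * Real.sin φ] ^ 2 =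
      r ^ 2 + s ^ 2 - 2 * r * s * Real.cos (θ - φ) := by
  rw [EuclideanSpace.dist_sq_eq, Fin.sum_univ_two, Real.dist_eq, Real.dist_eq, sq_abs, sq_abs,
    Real.cos_sub]
  simp only [Matrix.cons_val_zero, Matrix.cons_val_one]
  linear_combination r ^ 2 * Real.sin_sq_add_cos_sq θ + s ^ 2 * Real.sin_sq_add_cos_sq φ

/-- Planarity addendum to the Euclidean case of Proposition 6.5: if a
nondegenerate metric quadruple satisfies the comparison-angle embedding
conditions and at some point one comparison angle equals the sum of the
other two, then the quadruple embeds isometrically in the Euclidean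
plane. -/
theorem quadruple_planar_embedding_of_angle_equality
    {X : Type*} [MetricSpace X] (x : Fin 4 → X)
    (hinj : Function.Injective x)
    (hnd : ∀ i j k : Fin 4, i ≠ j → j ≠ k → i ≠ k →
      dist (x i) (x k) < dist (x i) (x j) + dist (x j) (x k))
    (hcond : ∀ i j l m : Fin 4, i ≠ j → i ≠ l → i ≠ m → j ≠ l → j ≠ m → l ≠ m →
      (comparisonAngle₀ (x i) (x j) (x l) + comparisonAngle₀ (x i) (x j) (x m) +
          comparisonAngle₀ (x i) (x l) (x m) ≤ 2 * Real.pi ∧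
        comparisonAngle₀ (x i) (x j) (x l) ≤
          comparisonAngle₀ (x i) (x j) (x m) + comparisonAngle₀ (x i) (x l) (x m)))
    (heq : ∃ i j l m : Fin 4, i ≠ j ∧ i ≠ l ∧ i ≠ m ∧ j ≠ l ∧ j ≠ m ∧ l ≠ m ∧
      comparisonAngle₀ (x i) (x j) (x l) =
        comparisonAngle₀ (x i) (x j) (x m) + comparisonAngle₀ (x i) (x l) (x m)) :
    ∃ p : Fin 4 → EuclideanSpace ℝ (Fin 2),
      ∀ i j, dist (p i) (p j) = dist (x i) (x j) := by
  obtain ⟨i, j, l, m, hij, hil, him, hjl, hjm, hlm, hangle⟩ := heq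
  have hcover : ∀ k, k = i ∨ k = j ∨ k = l ∨ k = m := by omega
  -- Put `x i` at the origin, `x m` in direction `0`, and `x j`, `x l` on opposite sides of it.
  obtain ⟨θ, hj, hl, hm⟩ : ∃ θ : Fin 4 → ℝ, θ j = comparisonAngle₀ (x i) (x j) (x m) ∧
      θ l = -comparisonAngle₀ (x i) (x l) (x m) ∧ θ m = 0 :=
    ⟨fun k => if k = j then comparisonAngle₀ (x i) (x j) (x m)
      else if k = l then -comparisonAngle₀ (x i) (x l) (x m) else 0,
      by simp, by simp [hjl.symm], by simp [hjm.symm, hlm.symm]⟩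
  have hjl' := cos_comparisonAngle₀_mul (x i) (x j) (x l)
  rw [hangle] at hjl'
  have hjm' := cos_comparisonAngle₀_mul (x i) (x j) (x m)
  have hlm' := cos_comparisonAngle₀_mul (x i) (x l) (x m)
  refine ⟨fun k => !₂[dist (x i) (x k) * Real.cos (θ k), dist (x i) (x k) * Real.sin (θ k)],
    fun a b => ?_⟩
  rw [← sq_eq_sq₀ dist_nonneg dist_nonneg, dist_polar_sq]
  have hsymm : ∀ a b, dist (x i) (x a) ^ 2 + dist (x i) (x b) ^ 2 -
        2 * dist (x i) (x a) * dist (x i) (x b) * Real.cos (θ a - θ b) = dist (x a) (x b) ^ 2 →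
      dist (x i) (x b) ^ 2 + dist (x i) (x a) ^ 2 -
        2 * dist (x i) (x b) * dist (x i) (x a) * Real.cos (θ b - θ a) = dist (x b) (x a) ^ 2 := by
    intro a b h
    rw [dist_comm (x b), ← h, ← Real.cos_neg (θ b - θ a), neg_sub]
    ring
  have hdiag : ∀ a, dist (x i) (x a) ^ 2 + dist (x i) (x a) ^ 2 -
      2 * dist (x i) (x a) * dist (x i) (x a) * Real.cos (θ a - θ a) = dist (x a) (x a) ^ 2 := by
    intro a
    rw [sub_self, Real.cos_zero, dist_self]
    ring
  have hvertex : ∀ a, dist (x i) (x i) ^ 2 + dist (x i) (x a) ^ 2 -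
      2 * dist (x i) (x i) * dist (x i) (x a) * Real.cos (θ i - θ a) = dist (x i) (x a) ^ 2 := by
    simp
  rcases hcover a with ha | ha | ha | ha <;> rcases hcover b with hb | hb | hb | hb <;>
    rw [ha, hb] <;>
    first
    | exact hdiag _
    | exact hvertex _
    | exact hsymm _ _ (hvertex _)
    | (rw [hj, hl, sub_neg_eq_add]; linarith)
    | (rw [hj, hm, sub_zero]; linarith)
    | (rw [hl, hm, sub_zero, Real.cos_neg]; linarith)
    | (apply hsymm; rw [hj, hl, sub_neg_eq_add]; linarith)
    | (apply hsymm; rw [hj, hm, sub_zero]; linarith)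
    | (apply hsymm; rw [hl, hm, sub_zero, Real.cos_neg]; linarith)
end

section
/- For any four points p₁, p₂, p₃, p₄ in EuclideanSpace ℝ (Fin 3), the Cayley–Menger determinant of their pairwise distances is nonnegative. -/
/-- The Cayley–Menger determinant of a quadruple with pairwise distances
`d i j`: the determinant of the 5×5 matrix bordered by `0` and ones, whose
inner 4×4 block consists of the squared distances. The index `none` plays
the role of the bordering row and column. -/
noncomputable def cayleyMenger (d : Fin 4 → Fin 4 → ℝ) : ℝ :=
  Matrix.det (Matrix.of fun i j : Option (Fin 4) =>
    match i, j with
    | none, none => 0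
    | none, some _ => 1
    | some _, none => 1
    | some i, some j => d i j ^ 2)

/-- The lift of `x` to the light cone of the quadratic form `cayleyMengerForm`. -/
noncomputable def coneLift (x : EuclideanSpace ℝ (Fin 3)) : Fin 5 → ℝ :=
  ![1, x 0 ^ 2 + x 1 ^ 2 + x 2 ^ 2, x 0, x 1, x 2]

/-- The matrix of the bilinear form whose value at two lifted points is their squared distance. -/
def cayleyMengerForm : Matrix (Fin 5) (Fin 5) ℝ :=
  !![0, 1, 0, 0, 0; 1, 0, 0, 0, 0; 0, 0, -2, 0, 0; 0, 0, 0, -2, 0; 0, 0, 0, 0, -2]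

/-- The matrix whose rows are the vector at infinity and the lifts of the four points. -/
noncomputable def liftMatrix (p : Fin 4 → EuclideanSpace ℝ (Fin 3)) : Matrix (Fin 5) (Fin 5) ℝ :=
  Matrix.of (Fin.cons ![0, 1, 0, 0, 0] fun i => coneLift (p i))

theorem det_cayleyMengerForm : cayleyMengerForm.det = 8 := by
  simp [cayleyMengerForm, Matrix.det_succ_row_zero, Fin.sum_univ_succ, Fin.succAbove]
  norm_num

theorem cayleyMenger_eq_eight_mul_sq (p : Fin 4 → EuclideanSpace ℝ (Fin 3)) :
    cayleyMenger (fun i j => dist (p i) (p j)) = 8 * (liftMatrix p).det ^ 2 := by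
  have hdet : (liftMatrix p * cayleyMengerForm * (liftMatrix p).transpose).det =
      8 * (liftMatrix p).det ^ 2 := by
    rw [Matrix.det_mul, Matrix.det_mul, Matrix.det_transpose, det_cayleyMengerForm]
    ring
  rw [← hdet, cayleyMenger, ← Matrix.det_submatrix_equiv_self (finSuccEquiv 4)]
  congr 1
  ext i j
  cases i using Fin.cases <;> cases j using Fin.cases <;>
    simp [Matrix.mul_apply, Fin.sum_univ_five, liftMatrix, coneLift, cayleyMengerForm,
      EuclideanSpace.dist_sq_eq, Fin.sum_univ_three, Real.dist_eq]
  ring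

/-- For any four points of Euclidean 3-space, the Cayley–Menger determinant
of their pairwise distances is nonnegative. -/
theorem cayleyMenger_nonneg (p : Fin 4 → EuclideanSpace ℝ (Fin 3)) :
    0 ≤ cayleyMenger (fun i j => dist (p i) (p j)) := by
  rw [cayleyMenger_eq_eight_mul_sq]
  positivity
end

section
/- (Cayley–Menger embedding criterion for quadruples.) Let (X, d) be a metric space and let x₁, x₂, x₃, x₄ ∈ X. There exist points p₁, p₂, p₃, p₄ in EuclideanSpace ℝ (Fin 3) with dist p_i p_j = d(x_i, x_j) for all i, j, if and only if the Cayley–Menger determinant of the distances d(x_i, x_j) is nonnegative. -/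
open Matrix

/-- The matrix of inner products of the vectors from point `0` to the other points, computed from
the pairwise distances by the polarization identity. -/
noncomputable def gramOfDist {n : ℕ} (d : Fin (n + 1) → Fin (n + 1) → ℝ) :
    Matrix (Fin n) (Fin n) ℝ :=
  Matrix.of fun i j => (d 0 i.succ ^ 2 + d 0 j.succ ^ 2 - d i.succ j.succ ^ 2) / 2

theorem cayleyMenger_eq_det_gramOfDist (d : Fin 4 → Fin 4 → ℝ) (hself : ∀ i, d i i = 0)
    (hsymm : ∀ i j, d i j = d j i) : cayleyMenger d = 8 * (gramOfDist d).det := by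
  have h : cayleyMenger d =
      det !![0, 1, 1, 1, 1;
        1, d 0 0 ^ 2, d 0 1 ^ 2, d 0 2 ^ 2, d 0 3 ^ 2;
        1, d 1 0 ^ 2, d 1 1 ^ 2, d 1 2 ^ 2, d 1 3 ^ 2;
        1, d 2 0 ^ 2, d 2 1 ^ 2, d 2 2 ^ 2, d 2 3 ^ 2;
        1, d 3 0 ^ 2, d 3 1 ^ 2, d 3 2 ^ 2, d 3 3 ^ 2] := by
    rw [cayleyMenger, ← det_submatrix_equiv_self (finSuccEquiv 4)]
    congr 1
    ext i j
    fin_cases i <;> fin_cases j <;> rfl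
  rw [h, det_fin_three]
  simp only [hself, hsymm 1 0, hsymm 2 0, hsymm 3 0, hsymm 2 1, hsymm 3 1, hsymm 3 2]
  simp [det_succ_row_zero, Fin.sum_univ_succ, gramOfDist, hself, Fin.succAbove,
    show Fin.succ (2 : Fin 3) = 3 from rfl, hsymm 2 1, hsymm 3 1, hsymm 3 2]
  ring

theorem quadratic_form_two_nonneg {a b c : ℝ} (ha : 0 ≤ a) (hc : 0 ≤ c) (h : b ^ 2 ≤ a * c)
    (y z : ℝ) : 0 ≤ a * y ^ 2 + 2 * b * y * z + c * z ^ 2 := by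
  rcases ha.eq_or_lt with rfl | ha
  · have hb : b = 0 := by nlinarith
    subst hb
    nlinarith [mul_nonneg hc (sq_nonneg z)]
  · refine nonneg_of_mul_nonneg_right ?_ ha
    nlinarith [sq_nonneg (a * y + b * z), mul_nonneg (sub_nonneg.2 h) (sq_nonneg z)]

/-- A real symmetric `3 × 3` matrix with nonnegative principal minors is positive semidefinite. -/
theorem Matrix.posSemidef_fin_three {A : Matrix (Fin 3) (Fin 3) ℝ} (hA : A.IsSymm)
    (hdiag : ∀ i, 0 ≤ A i i) (hminor : ∀ i j, A i j ^ 2 ≤ A i i * A j j) (hdet : 0 ≤ A.det) :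
    A.PosSemidef := by
  refine .of_dotProduct_mulVec_nonneg (isHermitian_iff_isSymm.2 hA) fun v => ?_
  have h10 : A 1 0 = A 0 1 := hA.apply 0 1
  have h20 : A 2 0 = A 0 2 := hA.apply 0 2
  have h21 : A 2 1 = A 1 2 := hA.apply 1 2
  rw [det_fin_three] at hdet
  simp only [dotProduct, mulVec, Fin.sum_univ_three, star_trivial]
  rw [h10, h20, h21] at hdet ⊢
  have h01 := hminor 0 1
  have h02 := hminor 0 2
  have h12 := hminor 1 2
  rcases (hdiag 0).eq_or_lt with h0 | h0
  · rw [← h0, zero_mul] at h01 h02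
    have e01 : A 0 1 = 0 := by nlinarith
    have e02 : A 0 2 = 0 := by nlinarith
    rw [← h0, e01, e02]
    linarith [quadratic_form_two_nonneg (hdiag 1) (hdiag 2) h12 (v 1) (v 2)]
  · refine nonneg_of_mul_nonneg_right ?_ h0
    have key := quadratic_form_two_nonneg (sub_nonneg.2 h01) (sub_nonneg.2 h02)
      (b := A 0 0 * A 1 2 - A 0 1 * A 0 2) (by linarith [mul_nonneg h0.le hdet]) (v 1) (v 2)
    linarith [sq_nonneg (A 0 0 * v 0 + A 0 1 * v 1 + A 0 2 * v 2)]

theorem gramOfDist_dist_eq_gram {n : ℕ} {E : Type*} [NormedAddCommGroup E] [InnerProductSpace ℝ E]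
    (p : Fin (n + 1) → E) :
    gramOfDist (fun i j => dist (p i) (p j)) = gram ℝ fun i => p i.succ - p 0 := by
  ext i j
  rw [gram_apply, real_inner_eq_norm_mul_self_add_norm_mul_self_sub_norm_sub_mul_self_div_two,
    sub_sub_sub_cancel_right]
  simp only [gramOfDist, of_apply, dist_comm (p 0), dist_eq_norm, sq]

open scoped MatrixOrder in
theorem Matrix.PosSemidef.exists_gram_eq {n : ℕ} {A : Matrix (Fin n) (Fin n) ℝ}
    (hA : A.PosSemidef) : ∃ v : Fin n → EuclideanSpace ℝ (Fin n), gram ℝ v = A := by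
  obtain ⟨B, rfl⟩ := CStarAlgebra.nonneg_iff_eq_star_mul_self.1 hA.nonneg
  refine ⟨fun i => WithLp.toLp 2 (B.col i), ?_⟩
  ext i j
  simp [mul_apply, star_eq_conjTranspose, PiLp.inner_apply, mul_comm]

theorem exists_dist_eq_of_posSemidef_gramOfDist {n : ℕ} {d : Fin (n + 1) → Fin (n + 1) → ℝ}
    (hself : ∀ i, d i i = 0) (hsymm : ∀ i j, d i j = d j i) (hnonneg : ∀ i j, 0 ≤ d i j)
    (hd : (gramOfDist d).PosSemidef) :
    ∃ p : Fin (n + 1) → EuclideanSpace ℝ (Fin n), ∀ i j, dist (p i) (p j) = d i j := by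
  obtain ⟨v, hv⟩ := hd.exists_gram_eq
  have hinner (i j : Fin n) :
      inner ℝ (v i) (v j) = (d 0 i.succ ^ 2 + d 0 j.succ ^ 2 - d i.succ j.succ ^ 2) / 2 :=
    congrFun₂ hv i j
  have hnorm (i : Fin n) : ‖v i‖ ^ 2 = d 0 i.succ ^ 2 := by
    rw [← real_inner_self_eq_norm_sq, hinner, hself]
    ring
  refine ⟨Fin.cons 0 v, fun i j => ?_⟩
  rw [← sq_eq_sq₀ dist_nonneg (hnonneg i j), dist_eq_norm]
  cases i using Fin.cases <;> cases j using Fin.cases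
  · simp [hself]
  · simp [hnorm]
  · simp [hnorm, hsymm _ 0]
  · rw [Fin.cons_succ, Fin.cons_succ, norm_sub_sq_real, hnorm, hnorm, hinner]
    ring

theorem gramOfDist_dist_sq_le {n : ℕ} {X : Type*} [PseudoMetricSpace X] (x : Fin (n + 1) → X)
    (i j : Fin n) :
    gramOfDist (fun i j => dist (x i) (x j)) i j ^ 2 ≤
      gramOfDist (fun i j => dist (x i) (x j)) i i *
        gramOfDist (fun i j => dist (x i) (x j)) j j := by
  simp only [gramOfDist, of_apply, dist_self]
  have h₁ := dist_triangle (x 0) (x i.succ) (x j.succ)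
  have h₂ := dist_triangle_left (x i.succ) (x j.succ) (x 0)
  have h₃ := dist_triangle_right (x 0) (x i.succ) (x j.succ)
  set a := dist (x 0) (x i.succ)
  set b := dist (x 0) (x j.succ)
  set c := dist (x i.succ) (x j.succ)
  have hc : 0 ≤ c := dist_nonneg
  have hupper : (a - b) ^ 2 ≤ c ^ 2 := sq_le_sq' (by linarith) (by linarith)
  have hlower : c ^ 2 ≤ (a + b) ^ 2 := pow_le_pow_left₀ hc h₂ 2
  nlinarith [mul_nonneg (sub_nonneg.2 hupper) (sub_nonneg.2 hlower)]

/-- Cayley–Menger embedding criterion for quadruples: a metric quadruple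
embeds isometrically in Euclidean 3-space iff the Cayley–Menger determinant
of its pairwise distances is nonnegative. -/
theorem quadruple_embeds_iff_cayleyMenger_nonneg
    {X : Type*} [MetricSpace X] (x : Fin 4 → X) :
    (∃ p : Fin 4 → EuclideanSpace ℝ (Fin 3),
        ∀ i j, dist (p i) (p j) = dist (x i) (x j)) ↔
      0 ≤ cayleyMenger (fun i j => dist (x i) (x j)) := by
  rw [cayleyMenger_eq_det_gramOfDist _ (fun i => dist_self (x i))
      (fun i j => dist_comm (x i) (x j)),
    mul_nonneg_iff_of_pos_left (by norm_num)]
  constructor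
  · rintro ⟨p, hp⟩
    simp only [← hp, gramOfDist_dist_eq_gram]
    exact (posSemidef_gram ℝ _).det_nonneg
  · intro h
    refine exists_dist_eq_of_posSemidef_gramOfDist (fun _ => dist_self _)
      (fun _ _ => dist_comm _ _) (fun _ _ => dist_nonneg)
      (posSemidef_fin_three ?_ (fun i => ?_) (gramOfDist_dist_sq_le x) h)
    · ext i j
      simp only [gramOfDist, transpose_apply, of_apply, dist_comm (x j.succ), add_comm]
    · rw [gramOfDist, of_apply, dist_self, zero_pow two_ne_zero, sub_zero]
      positivity
end
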